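/- Let f, g : ℝ^n → ℝ be smooth and compactly supported. Then for all x, y ∈ ℝ^n, |M(f,g)(x) − M(f,g)(y)| ≤ |x − y| ∫_0^1 [ M(f, |∇g|)(tx + (1−t)y) + M(|∇f|, g)(tx + (1−t)y) ] dt, where ∇f and ∇g are the (classical) gradients of f and g, and M(f,|∇g|) (resp. M(|∇f|,g)) denotes the bilinear maximal operator applied to the pair |f|, |∇g| (resp. |∇f|, |g|). -/

import Mathlib

/-!
For a fixed radius the average over `B_r` is an integral against a probability measure, and on the
segment `p t = t • x + (1 - t) • y` the product rule bounds the derivative of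
`t ↦ f (p t + z) * g (p t - z)` by `‖x - y‖` times
`|f| ‖∇g‖ + ‖∇f‖ |g|` (evaluated at `p t + z`, `p t - z`). Integrating over `t ∈ [0, 1]`, averaging
over `z` and exchanging the two integrals (`average_sub_le`) bounds the difference of the averages
at `x` and `y` by the integral of the maximal functions along the segment, uniformly in `r`. Taking
suprema over `r`, with `x` and `y` in both orders, finishes the proof.

The maximal functions have to be integrable along the segment, and the real-valued suprema must not
be junk: for bounded continuous inputs the averages are uniformly bounded and continuous in `x`, so
`biMax` is bounded and lower semicontinuous, hence measurable.
-/

open MeasureTheory Metric Filter Topology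
open scoped ENNReal

/-- The bilinear maximal operator with parameter `α = -1`:
`M(f,g)(x) = sup_{r>0} ⨍_{B_r} |f(x+z) g(x-z)| dz`. -/
noncomputable def biMax {n : ℕ} (f g : EuclideanSpace ℝ (Fin n) → ℝ)
    (x : EuclideanSpace ℝ (Fin n)) : ℝ :=
  ⨆ r : {r : ℝ // 0 < r},
    ⨍ z in ball (0 : EuclideanSpace ℝ (Fin n)) r.1, |f (x + z) * g (x - z)|

/-- The uniform probability measure on the ball of radius `r` centred at the origin. -/
noncomputable def ballMeasure (n : ℕ) (r : {r : ℝ // 0 < r}) :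
    Measure (EuclideanSpace ℝ (Fin n)) :=
  ((volume.restrict (ball (0 : EuclideanSpace ℝ (Fin n)) r.1)) Set.univ)⁻¹ •
    volume.restrict (ball (0 : EuclideanSpace ℝ (Fin n)) r.1)

instance ballMeasure_prob (n : ℕ) (r : {r : ℝ // 0 < r}) :
    IsProbabilityMeasure (ballMeasure n r) := by
  have h1 : volume (ball (0 : EuclideanSpace ℝ (Fin n)) r.1) ≠ 0 :=
    (measure_ball_pos volume _ r.2).ne'
  have h2 : volume (ball (0 : EuclideanSpace ℝ (Fin n)) r.1) ≠ ⊤ := measure_ball_lt_top.ne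
  constructor
  simp [ballMeasure, ENNReal.inv_mul_cancel h1 h2]

theorem biMax_eq {n : ℕ} (u v : EuclideanSpace ℝ (Fin n) → ℝ) (x : EuclideanSpace ℝ (Fin n)) :
    biMax u v x = ⨆ r, ∫ z, |u (x + z) * v (x - z)| ∂(ballMeasure n r) := rfl

section Bounded

variable {n : ℕ} {u v : EuclideanSpace ℝ (Fin n) → ℝ} {A B : ℝ}

theorem abs_mul_le_bound (hA : ∀ z, |u z| ≤ A) (hB : ∀ z, |v z| ≤ B)
    (a b : EuclideanSpace ℝ (Fin n)) : |u a * v b| ≤ A * B := by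
  rw [abs_mul]
  exact mul_le_mul (hA a) (hB b) (abs_nonneg _) ((abs_nonneg _).trans (hA a))

theorem integrable_pair (hu : Continuous u) (hv : Continuous v)
    (hA : ∀ z, |u z| ≤ A) (hB : ∀ z, |v z| ≤ B) (x : EuclideanSpace ℝ (Fin n))
    (ν : Measure (EuclideanSpace ℝ (Fin n))) [IsFiniteMeasure ν] :
    Integrable (fun z => |u (x + z) * v (x - z)|) ν := by
  refine Integrable.of_bound (C := A * B) ?_ (Eventually.of_forall fun z => ?_)
  · exact (by fun_prop : Continuous fun z => |u (x + z) * v (x - z)|).aestronglyMeasurable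
  · rw [Real.norm_eq_abs, abs_abs]
    exact abs_mul_le_bound hA hB _ _

theorem ballAverage_le (hu : Continuous u) (hv : Continuous v)
    (hA : ∀ z, |u z| ≤ A) (hB : ∀ z, |v z| ≤ B) (x : EuclideanSpace ℝ (Fin n))
    (r : {r : ℝ // 0 < r}) :
    ∫ z, |u (x + z) * v (x - z)| ∂(ballMeasure n r) ≤ A * B := by
  calc _ ≤ ∫ z, A * B ∂(ballMeasure n r) :=
        integral_mono (integrable_pair hu hv hA hB x _) (integrable_const _)
          fun z => abs_mul_le_bound hA hB _ _
    _ = A * B := by simp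

theorem bddAbove_ballAverage (hu : Continuous u) (hv : Continuous v)
    (hA : ∀ z, |u z| ≤ A) (hB : ∀ z, |v z| ≤ B) (x : EuclideanSpace ℝ (Fin n)) :
    BddAbove (Set.range fun r => ∫ z, |u (x + z) * v (x - z)| ∂(ballMeasure n r)) := by
  refine ⟨A * B, ?_⟩
  rintro _ ⟨r, rfl⟩
  exact ballAverage_le hu hv hA hB x r

theorem ballAverage_le_biMax (hu : Continuous u) (hv : Continuous v)
    (hA : ∀ z, |u z| ≤ A) (hB : ∀ z, |v z| ≤ B) (x : EuclideanSpace ℝ (Fin n))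
    (r : {r : ℝ // 0 < r}) :
    ∫ z, |u (x + z) * v (x - z)| ∂(ballMeasure n r) ≤ biMax u v x := by
  rw [biMax_eq]
  exact le_ciSup (bddAbove_ballAverage hu hv hA hB x) r

theorem continuous_ballAverage (hu : Continuous u) (hv : Continuous v)
    (hA : ∀ z, |u z| ≤ A) (hB : ∀ z, |v z| ≤ B) (r : {r : ℝ // 0 < r}) :
    Continuous fun x => ∫ z, |u (x + z) * v (x - z)| ∂(ballMeasure n r) := by
  refine continuous_of_dominated (bound := fun _ => A * B)
    (fun x => (integrable_pair hu hv hA hB x _).aestronglyMeasurable)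
    (fun x => Eventually.of_forall fun z => ?_) (integrable_const _)
    (Eventually.of_forall fun z => by fun_prop)
  rw [Real.norm_eq_abs, abs_abs]
  exact abs_mul_le_bound hA hB _ _

theorem measurable_biMax (hu : Continuous u) (hv : Continuous v)
    (hA : ∀ z, |u z| ≤ A) (hB : ∀ z, |v z| ≤ B) : Measurable (biMax u v) := by
  have h : LowerSemicontinuous fun x =>
      ⨆ r, ∫ z, |u (x + z) * v (x - z)| ∂(ballMeasure n r) :=
    lowerSemicontinuous_ciSup (fun x => bddAbove_ballAverage hu hv hA hB x)
      fun r => (continuous_ballAverage hu hv hA hB r).lowerSemicontinuous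
  exact h.measurable

theorem abs_biMax_le (hu : Continuous u) (hv : Continuous v)
    (hA : ∀ z, |u z| ≤ A) (hB : ∀ z, |v z| ≤ B) (x : EuclideanSpace ℝ (Fin n)) :
    |biMax u v x| ≤ A * B := by
  rw [biMax_eq, abs_of_nonneg (Real.iSup_nonneg fun r => integral_nonneg fun z => abs_nonneg _)]
  have : Nonempty {r : ℝ // 0 < r} := ⟨⟨1, one_pos⟩⟩
  exact ciSup_le fun r => ballAverage_le hu hv hA hB x r

theorem intervalIntegrable_biMax (hu : Continuous u) (hv : Continuous v)
    (hA : ∀ z, |u z| ≤ A) (hB : ∀ z, |v z| ≤ B) (x y : EuclideanSpace ℝ (Fin n)) :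
    IntervalIntegrable (fun t : ℝ => biMax u v (t • x + (1 - t) • y)) volume 0 1 := by
  rw [intervalIntegrable_iff_integrableOn_Ioc_of_le zero_le_one]
  refine Integrable.of_bound (C := A * B) ?_ (Eventually.of_forall fun t => ?_)
  · exact ((measurable_biMax hu hv hA hB).comp
      (by fun_prop : Continuous fun t : ℝ => t • x + (1 - t) • y).measurable).aestronglyMeasurable
  · exact abs_biMax_le hu hv hA hB _

end Bounded

/-- The product rule along the segment from `y` to `x`, integrated. -/
theorem abs_pair_sub_le {n : ℕ} {f g : EuclideanSpace ℝ (Fin n) → ℝ}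
    (hf : ContDiff ℝ 1 f) (hg : ContDiff ℝ 1 g) (x y z : EuclideanSpace ℝ (Fin n)) :
    |f (x + z) * g (x - z) - f (y + z) * g (y - z)| ≤
      ‖x - y‖ * ∫ t in (0:ℝ)..1,
        (|f ((t • x + (1 - t) • y) + z) * ‖fderiv ℝ g ((t • x + (1 - t) • y) - z)‖|
          + |‖fderiv ℝ f ((t • x + (1 - t) • y) + z)‖ * g ((t • x + (1 - t) • y) - z)|) := by
  have cf := hf.continuous
  have cg := hg.continuous
  have cf' := hf.continuous_fderiv one_ne_zero
  have cg' := hg.continuous_fderiv one_ne_zero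
  have hp : ∀ t : ℝ, HasDerivAt (fun t : ℝ => t • x + (1 - t) • y) (x - y) t := fun t => by
    exact (((hasDerivAt_id t).smul_const x).add
      (((hasDerivAt_id t).const_sub 1).smul_const y)).congr_deriv (by simp [sub_eq_add_neg])
  have hd : ∀ t : ℝ, HasDerivAt
      (fun t : ℝ => f ((t • x + (1 - t) • y) + z) * g ((t • x + (1 - t) • y) - z))
      (fderiv ℝ f ((t • x + (1 - t) • y) + z) (x - y) * g ((t • x + (1 - t) • y) - z)
        + f ((t • x + (1 - t) • y) + z) * fderiv ℝ g ((t • x + (1 - t) • y) - z) (x - y)) t :=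
    fun t => (((hf.differentiable one_ne_zero _).hasFDerivAt).comp_hasDerivAt t
      ((hp t).add_const z)).mul
      (((hg.differentiable one_ne_zero _).hasFDerivAt).comp_hasDerivAt t ((hp t).sub_const z))
  have hint := intervalIntegral.integral_eq_sub_of_hasDerivAt (a := 0) (b := 1)
    (fun t _ => hd t) (Continuous.intervalIntegrable (by fun_prop) _ _)
  simp only [one_smul, sub_self, zero_smul, add_zero, sub_zero, zero_add] at hint
  rw [← hint, ← Real.norm_eq_abs, ← intervalIntegral.integral_const_mul]
  refine intervalIntegral.norm_integral_le_of_norm_le zero_le_one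
    (Eventually.of_forall fun t _ => ?_) (Continuous.intervalIntegrable (by fun_prop) _ _)
  refine (norm_add_le _ _).trans ?_
  rw [norm_mul, norm_mul, abs_mul, abs_mul, abs_norm, abs_norm]
  have h1 := (fderiv ℝ f ((t • x + (1 - t) • y) + z)).le_opNorm (x - y)
  have h2 := (fderiv ℝ g ((t • x + (1 - t) • y) - z)).le_opNorm (x - y)
  have h3 := mul_le_mul_of_nonneg_right h1 (norm_nonneg (g ((t • x + (1 - t) • y) - z)))
  have h4 := mul_le_mul_of_nonneg_left h2 (norm_nonneg (f ((t • x + (1 - t) • y) + z)))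
  simp only [Real.norm_eq_abs] at h1 h2 h3 h4 ⊢
  linarith

/-- The estimate for a single radius, by Fubini. -/
theorem average_sub_le {n : ℕ} {f g : EuclideanSpace ℝ (Fin n) → ℝ}
    (hf : ContDiff ℝ 1 f) (hg : ContDiff ℝ 1 g) {A B A' B' : ℝ}
    (hA : ∀ z, |f z| ≤ A) (hB : ∀ z, |g z| ≤ B)
    (hA' : ∀ z, |‖fderiv ℝ f z‖| ≤ A') (hB' : ∀ z, |‖fderiv ℝ g z‖| ≤ B')
    (r : {r : ℝ // 0 < r}) (x y : EuclideanSpace ℝ (Fin n)) :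
    |∫ z, |f (x + z) * g (x - z)| ∂(ballMeasure n r)
        - ∫ z, |f (y + z) * g (y - z)| ∂(ballMeasure n r)| ≤
      ‖x - y‖ * ∫ t in (0:ℝ)..1,
          (biMax f (fun z => ‖fderiv ℝ g z‖) (t • x + (1 - t) • y)
            + biMax (fun z => ‖fderiv ℝ f z‖) g (t • x + (1 - t) • y)) := by
  have cf := hf.continuous
  have cg := hg.continuous
  have cf' : Continuous fun z => ‖fderiv ℝ f z‖ := (hf.continuous_fderiv one_ne_zero).norm
  have cg' : Continuous fun z => ‖fderiv ℝ g z‖ := (hg.continuous_fderiv one_ne_zero).norm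
  let K : EuclideanSpace ℝ (Fin n) → ℝ → ℝ := fun z t =>
    |f ((t • x + (1 - t) • y) + z) * ‖fderiv ℝ g ((t • x + (1 - t) • y) - z)‖|
      + |‖fderiv ℝ f ((t • x + (1 - t) • y) + z)‖ * g ((t • x + (1 - t) • y) - z)|
  have hK : Integrable (Function.uncurry K)
      ((ballMeasure n r).prod (volume.restrict (Set.Ioc (0:ℝ) 1))) := by
    refine Integrable.of_bound (C := A * B' + A' * B) ?_ (Eventually.of_forall fun p => ?_)
    · have e1 := hf.continuous_fderiv one_ne_zero
      have e2 := hg.continuous_fderiv one_ne_zero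
      refine Continuous.aestronglyMeasurable ?_
      simp only [K, Function.uncurry_def]
      fun_prop
    · rw [Real.norm_eq_abs]
      change |K p.1 p.2| ≤ _
      rw [abs_of_nonneg (by positivity)]
      exact add_le_add (abs_mul_le_bound hA hB' _ _) (abs_mul_le_bound hA' hB _ _)
  have hKz : Integrable (fun z => ∫ t in (0:ℝ)..1, K z t) (ballMeasure n r) := by
    simp only [intervalIntegral.integral_of_le zero_le_one]
    exact hK.integral_prod_left
  have hKt : Integrable (fun t => ∫ z, K z t ∂(ballMeasure n r))
      (volume.restrict (Set.Ioc (0:ℝ) 1)) := hK.integral_prod_right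
  have hswap : ∫ z, (∫ t in (0:ℝ)..1, K z t) ∂(ballMeasure n r)
      = ∫ t in (0:ℝ)..1, ∫ z, K z t ∂(ballMeasure n r) := by
    simp only [intervalIntegral.integral_of_le zero_le_one]
    exact integral_integral_swap hK
  rw [← integral_sub (integrable_pair cf cg hA hB x _) (integrable_pair cf cg hA hB y _),
    ← Real.norm_eq_abs]
  calc _ ≤ ∫ z, ‖x - y‖ * (∫ t in (0:ℝ)..1, K z t) ∂(ballMeasure n r) := by
        refine norm_integral_le_of_norm_le (hKz.const_mul _) (Eventually.of_forall fun z => ?_)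
        exact (abs_abs_sub_abs_le_abs_sub _ _).trans (abs_pair_sub_le hf hg x y z)
    _ = ‖x - y‖ * ∫ t in (0:ℝ)..1, ∫ z, K z t ∂(ballMeasure n r) := by
        rw [integral_const_mul, hswap]
    _ ≤ _ := by
        refine mul_le_mul_of_nonneg_left ?_ (norm_nonneg _)
        refine intervalIntegral.integral_mono_on zero_le_one
          ((intervalIntegrable_iff_integrableOn_Ioc_of_le zero_le_one).2 hKt)
          ((intervalIntegrable_biMax cf cg' hA hB' x y).add
            (intervalIntegrable_biMax cf' cg hA' hB x y)) fun t _ => ?_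
        simp only [K]
        rw [integral_add (integrable_pair cf cg' hA hB' _ _) (integrable_pair cf' cg hA' hB _ _)]
        exact add_le_add (ballAverage_le_biMax cf cg' hA hB' _ r)
          (ballAverage_le_biMax cf' cg hA' hB _ r)

theorem stmt_3 (n : ℕ) (f g : EuclideanSpace ℝ (Fin n) → ℝ)
    (hf : ContDiff ℝ (⊤ : ℕ∞) f) (hfc : HasCompactSupport f)
    (hg : ContDiff ℝ (⊤ : ℕ∞) g) (hgc : HasCompactSupport g) :
    ∀ x y : EuclideanSpace ℝ (Fin n),
      |biMax f g x - biMax f g y| ≤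
        ‖x - y‖ * ∫ t in (0:ℝ)..1,
          (biMax f (fun z => ‖fderiv ℝ g z‖) (t • x + (1 - t) • y)
            + biMax (fun z => ‖fderiv ℝ f z‖) g (t • x + (1 - t) • y)) := by
  intro x y
  have hf1 : ContDiff ℝ 1 f := hf.of_le (by exact_mod_cast le_top)
  have hg1 : ContDiff ℝ 1 g := hg.of_le (by exact_mod_cast le_top)
  obtain ⟨A, hA⟩ := hfc.exists_bound_of_continuous hf1.continuous
  obtain ⟨B, hB⟩ := hgc.exists_bound_of_continuous hg1.continuous
  obtain ⟨A', hA'⟩ := (hfc.fderiv (𝕜 := ℝ)).exists_bound_of_continuous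
    (hf1.continuous_fderiv one_ne_zero)
  obtain ⟨B', hB'⟩ := (hgc.fderiv (𝕜 := ℝ)).exists_bound_of_continuous
    (hg1.continuous_fderiv one_ne_zero)
  have key := fun r => average_sub_le hf1 hg1 hA hB (fun z => (abs_norm _).trans_le (hA' z))
    (fun z => (abs_norm _).trans_le (hB' z)) r x y
  have : Nonempty {r : ℝ // 0 < r} := ⟨⟨1, one_pos⟩⟩
  rw [abs_sub_le_iff, sub_le_iff_le_add, sub_le_iff_le_add]
  constructor
  · rw [biMax_eq f g x]
    refine ciSup_le fun r => ?_
    have h1 := (abs_sub_le_iff.1 (key r)).1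
    have h2 := ballAverage_le_biMax hf1.continuous hg1.continuous hA hB y r
    linarith
  · rw [biMax_eq f g y]
    refine ciSup_le fun r => ?_
    have h1 := (abs_sub_le_iff.1 (key r)).2
    have h2 := ballAverage_le_biMax hf1.continuous hg1.continuous hA hB x r
    linarith
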